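/- arXiv:2003.01449 — 5 statements merged into one kernel-verified Lean document; each statement's English description precedes it below -/
import Mathlib

section
/- (Short-distance Green function estimate.) For every integer N ≥ 3 and every s with 0 < s < 1, there exist constants R₁ > 0, C₁ > 0 and C₁' > 0, depending only on N and s, such that C₁ · r^{-(N-2s)} ≤ F_{N,s}(r) ≤ C₁' · r^{-(N-2s)} for all r with 0 < r ≤ R₁. -/
open Real MeasureTheory Set Filter

/-- The explicit function comparable to the heat kernel of hyperbolic space `ℍ^N`
at geodesic distance `r`. -/
noncomputable def hN (N : ℕ) (t r : ℝ) : ℝ :=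
  (4 * π * t) ^ (-(N : ℝ) / 2) *
    Real.exp (-(((N : ℝ) - 1) ^ 2 * t) / 4 - ((N : ℝ) - 1) * r / 2 - r ^ 2 / (4 * t)) *
    (1 + r + t) ^ (((N : ℝ) - 3) / 2) * (1 + r)

/-- `F N s r = ∫₀^∞ h_N(t,r) t^{s-1} dt`, comparable to the Green function of
`(-Δ_{ℍ^N})^s` at geodesic distance `r`. -/
noncomputable def F (N : ℕ) (s r : ℝ) : ℝ :=
  ∫ t in Ioi (0 : ℝ), hN N t r * t ^ (s - 1)

lemma aux_G_int (q : ℝ) (hq : 0 < q) :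
    IntegrableOn (fun u : ℝ => u ^ (-q - 1) * Real.exp (-(1 / (4 * u)))) (Ioi 0) := by
  have h1 : IntegrableOn (fun y : ℝ => y ^ (q - 1) * Real.exp (-(1/4) * y)) (Ioi 0) := by
    have := integrableOn_rpow_mul_exp_neg_mul_rpow (p := 1) (s := q - 1) (b := 1/4)
      (by linarith) one_pos (by norm_num)
    simpa using this
  have h2 := (MeasureTheory.integrableOn_Ioi_comp_rpow_iff' (fun y : ℝ => y ^ (q - 1) * Real.exp (-(1/4) * y))
    (p := -1) (by norm_num)).2 h1
  refine h2.congr_fun ?_ measurableSet_Ioi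
  intro u hu
  have hu : 0 < u := hu
  simp only [smul_eq_mul]
  rw [← Real.rpow_mul hu.le, ← mul_assoc, ← Real.rpow_add hu, Real.rpow_neg_one]
  congr 2
  · ring
  · field_simp

lemma aux_factor (N : ℕ) (s r u : ℝ) (hr : 0 < r) (hu : 0 < u) :
    hN N (r ^ 2 * u) r * (r ^ 2 * u) ^ (s - 1) =
      (r ^ 2) ^ (-((N : ℝ) / 2 - s) - 1) * ((4 * π) ^ (-(N : ℝ) / 2) *
      ((u ^ (-((N : ℝ) / 2 - s) - 1) * Real.exp (-(1 / (4 * u)))) *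
        (Real.exp (-(((N : ℝ) - 1) ^ 2 / 4 * (r ^ 2 * u))) * Real.exp (-(((N : ℝ) - 1) * r / 2)) *
          (1 + r + r ^ 2 * u) ^ (((N : ℝ) - 3) / 2) * (1 + r)))) := by
  unfold hN
  have h1 : (4 * π * (r ^ 2 * u)) ^ (-(N : ℝ) / 2) =
      (4 * π) ^ (-(N : ℝ) / 2) * ((r ^ 2) ^ (-(N : ℝ) / 2) * u ^ (-(N : ℝ) / 2)) := by
    rw [Real.mul_rpow (by positivity) (by positivity), Real.mul_rpow (by positivity) hu.le]
  have h2 : (r ^ 2 * u) ^ (s - 1) = (r ^ 2) ^ (s - 1) * u ^ (s - 1) :=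
    Real.mul_rpow (by positivity) hu.le
  have h3 : ∀ x : ℝ, 0 < x → x ^ (-((N : ℝ) / 2 - s) - 1) = x ^ (-(N : ℝ) / 2) * x ^ (s - 1) := by
    intro x hx
    rw [← Real.rpow_add hx]; congr 1; ring
  have h4 : Real.exp (-(((N : ℝ) - 1) ^ 2 * (r ^ 2 * u)) / 4 - ((N : ℝ) - 1) * r / 2
        - r ^ 2 / (4 * (r ^ 2 * u))) = Real.exp (-(1 / (4 * u))) *
        (Real.exp (-(((N : ℝ) - 1) ^ 2 / 4 * (r ^ 2 * u))) *
          Real.exp (-(((N : ℝ) - 1) * r / 2))) := by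
    rw [← Real.exp_add, ← Real.exp_add]; congr 1; field_simp; ring
  rw [h1, h2, h3 _ (by positivity), h3 _ hu, h4]
  ring

lemma aux_bounds (N : ℕ) (hN3 : 3 ≤ N) (r u : ℝ) (hr : 0 < r) (hr1 : r ≤ 1) (hu : 0 < u) :
    Real.exp (-(((N : ℝ) - 1) / 2)) * Real.exp (-(((N : ℝ) - 1) ^ 2 / 4 * u)) ≤
        (Real.exp (-(((N : ℝ) - 1) ^ 2 / 4 * (r ^ 2 * u))) * Real.exp (-(((N : ℝ) - 1) * r / 2)) *
          (1 + r + r ^ 2 * u) ^ (((N : ℝ) - 3) / 2) * (1 + r)) ∧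
     (Real.exp (-(((N : ℝ) - 1) ^ 2 / 4 * (r ^ 2 * u))) * Real.exp (-(((N : ℝ) - 1) * r / 2)) *
          (1 + r + r ^ 2 * u) ^ (((N : ℝ) - 3) / 2) * (1 + r)) ≤ 2 ^ (((N : ℝ) - 3) / 2) * 2 := by
  have hN : (3 : ℝ) ≤ N := by exact_mod_cast hN3
  have ha : 0 ≤ ((N : ℝ) - 3) / 2 := by linarith
  set t := r ^ 2 * u with ht
  have ht0 : 0 < t := by positivity
  have htu : t ≤ u := by
    have : r ^ 2 ≤ 1 := by nlinarith
    nlinarith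
  constructor
  · have e1 : Real.exp (-(((N : ℝ) - 1) / 2)) ≤ Real.exp (-(((N : ℝ) - 1) * r / 2)) := by
      apply Real.exp_le_exp.2; nlinarith
    have e2 : Real.exp (-(((N : ℝ) - 1) ^ 2 / 4 * u)) ≤ Real.exp (-(((N : ℝ) - 1) ^ 2 / 4 * t)) := by
      apply Real.exp_le_exp.2
      have := mul_le_mul_of_nonneg_left htu (by positivity : 0 ≤ ((N : ℝ) - 1) ^ 2 / 4)
      linarith
    have e3 : 1 ≤ (1 + r + t) ^ (((N : ℝ) - 3) / 2) := Real.one_le_rpow (by linarith) ha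
    have e4 : 1 ≤ 1 + r := by linarith
    calc _ = Real.exp (-(((N : ℝ) - 1) ^ 2 / 4 * u)) * Real.exp (-(((N : ℝ) - 1) / 2)) * 1 * 1 := by ring
      _ ≤ _ := by gcongr
  · have e1 : Real.exp (-(((N : ℝ) - 1) * r / 2)) ≤ 1 := by
      apply Real.exp_le_one_iff.2
      have : 0 ≤ ((N : ℝ) - 1) * r := mul_nonneg (by linarith) hr.le
      linarith
    have e3 : (1 + r + t) ^ (((N : ℝ) - 3) / 2) ≤
        2 ^ (((N : ℝ) - 3) / 2) * Real.exp (t * (((N : ℝ) - 3) / 2)) := by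
      rw [Real.exp_mul, ← Real.mul_rpow (by norm_num) (Real.exp_pos _).le]
      apply Real.rpow_le_rpow (by positivity) _ ha
      have := Real.add_one_le_exp t
      linarith
    have e5 : Real.exp (-(((N : ℝ) - 1) ^ 2 / 4 * t)) * Real.exp (t * (((N : ℝ) - 3) / 2)) ≤ 1 := by
      rw [← Real.exp_add]
      apply Real.exp_le_one_iff.2
      nlinarith [mul_nonneg ht0.le (sq_nonneg ((N : ℝ) - 2))]
    calc _ ≤ Real.exp (-(((N : ℝ) - 1) ^ 2 / 4 * t)) * 1 *
          (2 ^ (((N : ℝ) - 3) / 2) * Real.exp (t * (((N : ℝ) - 3) / 2))) * 2 := by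
            gcongr; linarith
      _ = (Real.exp (-(((N : ℝ) - 1) ^ 2 / 4 * t)) * Real.exp (t * (((N : ℝ) - 3) / 2))) *
          (2 ^ (((N : ℝ) - 3) / 2) * 2) := by ring
      _ ≤ 1 * (2 ^ (((N : ℝ) - 3) / 2) * 2) := by gcongr
      _ = _ := one_mul _

theorem F_short_distance_estimate (N : ℕ) (hN3 : 3 ≤ N) (s : ℝ) (hs0 : 0 < s) (hs1 : s < 1) :
    ∃ R₁ > (0 : ℝ), ∃ C₁ > (0 : ℝ), ∃ C₁' > (0 : ℝ),
      ∀ r : ℝ, 0 < r → r ≤ R₁ →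
        C₁ * r ^ (-((N : ℝ) - 2 * s)) ≤ F N s r ∧
          F N s r ≤ C₁' * r ^ (-((N : ℝ) - 2 * s)) := by
  have hNr : (3 : ℝ) ≤ N := by exact_mod_cast hN3
  set q : ℝ := (N : ℝ) / 2 - s with hq
  have hq0 : 0 < q := by rw [hq]; linarith
  set G : ℝ → ℝ := fun u => u ^ (-q - 1) * Real.exp (-(1 / (4 * u))) with hG
  have hGi : IntegrableOn G (Ioi 0) := aux_G_int q hq0
  have hGpos : ∀ u ∈ Ioi (0 : ℝ), 0 < G u := by
    intro u hu
    have hu : 0 < u := hu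
    simp only [hG]; positivity
  set H : ℝ → ℝ := fun u => G u * Real.exp (-(((N : ℝ) - 1) ^ 2 / 4 * u)) with hH
  have hHpos : ∀ u ∈ Ioi (0 : ℝ), 0 < H u := fun u hu => mul_pos (hGpos u hu) (Real.exp_pos _)
  have hHi : IntegrableOn H (Ioi 0) := by
    refine Integrable.mono' hGi ?_ ?_
    · apply Measurable.aestronglyMeasurable
      simp only [hH, hG]; fun_prop
    · filter_upwards [ae_restrict_mem measurableSet_Ioi] with u hu
      rw [Real.norm_of_nonneg (hHpos u hu).le]
      apply mul_le_of_le_one_right (hGpos u hu).le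
      apply Real.exp_le_one_iff.2
      have hu : 0 < u := hu
      have : 0 ≤ ((N : ℝ) - 1) ^ 2 / 4 * u := by positivity
      linarith
  have pos : ∀ f : ℝ → ℝ, (∀ u ∈ Ioi (0 : ℝ), 0 < f u) → IntegrableOn f (Ioi 0) →
      0 < ∫ u in Ioi (0 : ℝ), f u := by
    intro f hf hfi
    rw [setIntegral_pos_iff_support_of_nonneg_ae _ hfi]
    · have : Ioi (0 : ℝ) ⊆ Function.support f ∩ Ioi 0 := fun u hu => ⟨(hf u hu).ne', hu⟩
      refine lt_of_lt_of_le ?_ (measure_mono this)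
      simp
    · filter_upwards [ae_restrict_mem measurableSet_Ioi] with u hu using (hf u hu).le
  have hIG := pos G hGpos hGi
  have hIH := pos H hHpos hHi
  set A : ℝ := (4 * π) ^ (-(N : ℝ) / 2) with hA
  have hA0 : 0 < A := by positivity
  set c : ℝ := Real.exp (-(((N : ℝ) - 1) / 2)) with hc
  have hc0 : 0 < c := Real.exp_pos _
  set B : ℝ := 2 ^ (((N : ℝ) - 3) / 2) * 2 with hB
  have hB0 : 0 < B := by positivity
  refine ⟨1, one_pos, A * c * ∫ u in Ioi (0 : ℝ), H u, by positivity,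
    A * B * ∫ u in Ioi (0 : ℝ), G u, by positivity, ?_⟩
  intro r hr hr1
  set K : ℝ → ℝ := fun u => hN N (r ^ 2 * u) r * (r ^ 2 * u) ^ (s - 1) with hK
  have hF : F N s r = r ^ 2 * ∫ u in Ioi (0 : ℝ), K u := by
    have := integral_comp_mul_left_Ioi (fun t => hN N t r * t ^ (s - 1)) 0
      (by positivity : 0 < r ^ 2)
    simp only [mul_zero, smul_eq_mul] at this
    simp only [hK, this, F]
    field_simp
  set P : ℝ := (r ^ 2) ^ (-q - 1) with hP
  have hP0 : 0 < P := by positivity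
  have hPr : r ^ 2 * P = r ^ (-((N : ℝ) - 2 * s)) := by
    rw [hP, ← Real.rpow_natCast r 2, ← Real.rpow_mul hr.le, ← Real.rpow_add hr]
    congr 1; rw [hq]; push_cast; ring
  have hlow : ∀ u ∈ Ioi (0 : ℝ), P * (A * c) * H u ≤ K u := by
    intro u hu
    have hb := (aux_bounds N hN3 r u hr hr1 hu).1
    have hg := hGpos u hu
    calc _ = P * (A * (G u * (c * Real.exp (-(((N : ℝ) - 1) ^ 2 / 4 * u))))) := by
          simp only [hH]; ring
      _ ≤ _ := by
          simp only [hK]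
          rw [aux_factor N s r u hr hu]
          gcongr
  have hup : ∀ u ∈ Ioi (0 : ℝ), K u ≤ P * (A * B) * G u := by
    intro u hu
    have hb := (aux_bounds N hN3 r u hr hr1 hu).2
    have hg := hGpos u hu
    calc _ ≤ P * (A * (G u * B)) := by
          simp only [hK]
          rw [aux_factor N s r u hr hu]
          gcongr
      _ = _ := by ring
  have hKi : IntegrableOn K (Ioi 0) := by
    refine Integrable.mono' (hGi.const_mul (P * (A * B))) ?_ ?_
    · apply Measurable.aestronglyMeasurable
      simp only [hK, hN]; fun_prop
    · filter_upwards [ae_restrict_mem measurableSet_Ioi] with u hu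
      have h0 : 0 ≤ K u := le_trans (by have := hHpos u hu; positivity) (hlow u hu)
      rw [Real.norm_of_nonneg h0]
      exact hup u hu
  have h1 := setIntegral_mono_on (hHi.const_mul (P * (A * c))) hKi measurableSet_Ioi hlow
  have h2 := setIntegral_mono_on hKi (hGi.const_mul (P * (A * B))) measurableSet_Ioi hup
  rw [integral_const_mul] at h1 h2
  rw [hF, ← hPr]
  have hr2 : 0 < r ^ 2 := by positivity
  constructor
  · calc _ = r ^ 2 * (P * (A * c) * ∫ u in Ioi (0 : ℝ), H u) := by ring
      _ ≤ _ := by gcongr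
  · calc _ ≤ r ^ 2 * (P * (A * B) * ∫ u in Ioi (0 : ℝ), G u) := by gcongr
      _ = _ := by ring
end

section
/- (Long-distance Green function estimate.) For every integer N ≥ 3 and every s with 0 < s < 1, there exist constants R₂ > 0, C₂ > 0 and C₂' > 0, depending only on N and s, such that C₂ · e^{-(N-1)r} r^{s-1} ≤ F_{N,s}(r) ≤ C₂' · e^{-(N-1)r} r^{s-1} for all r ≥ R₂. -/
open Real MeasureTheory Set Filter

noncomputable def gW (a r t : ℝ) : ℝ := (a * t - r) / (2 * √t)
noncomputable def gW' (a r t : ℝ) : ℝ := (a * t + r) / (4 * (t * √t))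

lemma gW_deriv (a r t : ℝ) (ht : 0 < t) : HasDerivAt (gW a r) (gW' a r t) t := by
  have hs : 0 < √t := Real.sqrt_pos.2 ht
  have h1 : HasDerivAt (fun t : ℝ => a * t - r) a t := by
    simpa using ((hasDerivAt_id t).const_mul a).sub_const r
  have h2 : HasDerivAt (fun t : ℝ => 2 * √t) (2 * (1 / (2 * √t))) t :=
    (Real.hasDerivAt_sqrt ht.ne').const_mul 2
  have h3 := h1.div h2 (by positivity)
  have e : gW' a r t = (a * (2 * √t) - (a * t - r) * (2 * (1 / (2 * √t)))) / (2 * √t) ^ 2 := by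
    unfold gW'
    obtain ⟨x, hx⟩ : ∃ x, x = √t := ⟨_, rfl⟩
    have ht2 : t = x ^ 2 := by rw [hx, Real.sq_sqrt ht.le]
    rw [← hx] at hs ⊢
    rw [ht2]
    field_simp
    ring
  rw [e]
  exact h3

lemma gW'_pos (a r t : ℝ) (ha : 0 < a) (hr : 0 < r) (ht : 0 < t) : 0 < gW' a r t := by
  have hs : 0 < √t := Real.sqrt_pos.2 ht
  unfold gW'
  positivity

lemma gW_inj (a r : ℝ) (ha : 0 < a) (hr : 0 < r) : InjOn (gW a r) (Ioi 0) := by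
  apply StrictMonoOn.injOn
  apply strictMonoOn_of_deriv_pos (convex_Ioi 0)
  · intro t ht
    exact (gW_deriv a r t ht).continuousAt.continuousWithinAt
  · intro t ht
    rw [interior_Ioi] at ht
    rw [(gW_deriv a r t ht).deriv]
    exact gW'_pos a r t ha hr ht

lemma gW_sq (a r t : ℝ) (ht : 0 < t) : (gW a r t) ^ 2 = (a * t - r) ^ 2 / (4 * t) := by
  unfold gW
  rw [div_pow, mul_pow, Real.sq_sqrt ht.le]; norm_num

lemma gauss_int (a r : ℝ) (ha : 0 < a) (hr : 0 < r) :
    IntegrableOn (fun t => gW' a r t * Real.exp (-(1/2) * (gW a r t) ^ 2)) (Ioi 0) ∧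
    ∫ t in Ioi 0, gW' a r t * Real.exp (-(1/2) * (gW a r t) ^ 2) ≤ √(π / (1/2)) := by
  have hd : ∀ t ∈ Ioi (0:ℝ), HasDerivWithinAt (gW a r) (gW' a r t) (Ioi 0) t :=
    fun t ht => (gW_deriv a r t ht).hasDerivWithinAt
  have hg : Integrable (fun x : ℝ => Real.exp (-(1/2) * x ^ 2)) :=
    integrable_exp_neg_mul_sq (by norm_num)
  have h1 := integrableOn_image_iff_integrableOn_abs_deriv_smul measurableSet_Ioi hd
    (gW_inj a r ha hr) (fun x : ℝ => Real.exp (-(1/2) * x ^ 2))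
  have h2 := integral_image_eq_integral_abs_deriv_smul measurableSet_Ioi hd
    (gW_inj a r ha hr) (fun x : ℝ => Real.exp (-(1/2) * x ^ 2))
  have he : EqOn (fun t => |gW' a r t| • Real.exp (-(1/2) * (gW a r t) ^ 2))
      (fun t => gW' a r t * Real.exp (-(1/2) * (gW a r t) ^ 2)) (Ioi 0) := by
    intro t ht
    simp only [smul_eq_mul]
    rw [abs_of_pos (gW'_pos a r t ha hr ht)]
  constructor
  · exact (integrableOn_congr_fun he measurableSet_Ioi).1 (h1.1 hg.integrableOn)
  · rw [← setIntegral_congr_fun measurableSet_Ioi he, ← h2, ← integral_gaussian]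
    exact setIntegral_le_integral hg (Eventually.of_forall fun x => (Real.exp_pos _).le)

lemma exp_split (a r t : ℝ) (ht : 0 < t) :
    -(a ^ 2 * t) / 4 - a * r / 2 - r ^ 2 / (4 * t) = -a * r + -(gW a r t) ^ 2 := by
  rw [gW_sq a r t ht]
  field_simp
  ring

lemma poly_exp (N : ℕ) (a q : ℝ) (hq : 0 < q) :
    (1 + q) ^ N * Real.exp (-(q / 4 - a / 2) / 2) ≤
      (N.factorial : ℝ) * 8 ^ N * Real.exp (1 / 8 + a / 4) := by
  have h := Real.pow_div_factorial_le_exp ((1 + q) / 8) (by positivity) N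
  have hf : (0:ℝ) < N.factorial := by positivity
  rw [div_le_iff₀ hf, div_pow, div_le_iff₀ (by positivity)] at h
  have e : Real.exp (1 / 8 + a / 4) =
      Real.exp ((1 + q) / 8) * Real.exp (-(q / 4 - a / 2) / 2) := by
    rw [← Real.exp_add]; congr 1; ring
  rw [e]
  calc _ ≤ (Real.exp ((1 + q) / 8) * N.factorial * 8 ^ N) * Real.exp (-(q / 4 - a / 2) / 2) := by
        gcongr
    _ = _ := by ring

noncomputable def KK (N : ℕ) : ℝ := 2 ^ (((N:ℝ) - 3) / 2) * 8 *
  ((N.factorial : ℝ) * 8 ^ N * Real.exp (1 / 8 + ((N:ℝ) - 1) / 4))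

lemma KK_pos (N : ℕ) : 0 < KK N := by unfold KK; positivity

lemma pointwise (N : ℕ) (hN3 : 3 ≤ N) (s : ℝ) (hs0 : 0 < s) (hs1 : s < 1) (r t : ℝ)
    (hr : 1 ≤ r) (ht : 0 < t) :
    hN N t r * t ^ (s - 1) ≤ KK N * Real.exp (-((N : ℝ) - 1) * r) * r ^ (s - 1) *
      (gW' ((N:ℝ) - 1) r t * Real.exp (-(1/2) * (gW ((N:ℝ) - 1) r t) ^ 2)) := by
  have hN' : (3:ℝ) ≤ N := by exact_mod_cast hN3
  obtain ⟨a, ha⟩ : ∃ a : ℝ, a = (N:ℝ) - 1 := ⟨_, rfl⟩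
  obtain ⟨p, hp⟩ : ∃ p : ℝ, p = ((N:ℝ) - 3) / 2 := ⟨_, rfl⟩
  have hp0 : 0 ≤ p := by rw [hp]; linarith
  have ha2 : 2 ≤ a := by linarith
  have hr0 : 0 < r := by linarith
  unfold hN KK
  rw [← ha, ← hp, exp_split a r t ht, Real.exp_add]
  obtain ⟨w, hw⟩ : ∃ w : ℝ, w = gW a r t ^ 2 := ⟨_, rfl⟩
  obtain ⟨q, hq⟩ : ∃ q : ℝ, q = r / t := ⟨_, rfl⟩
  have hq0 : 0 < q := by rw [hq]; positivity
  have hrq : r = q * t := by rw [hq]; field_simp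
  have hwq : q / 4 - a / 2 ≤ w := by
    rw [hw, gW_sq a r t ht]
    have e : (a * t - r) ^ 2 / (4 * t) = r * ((a - q) ^ 2 / (4 * q)) := by
      rw [hrq]; field_simp
    rw [e]
    have h1 : q / 4 - a / 2 ≤ (a - q) ^ 2 / (4 * q) := by
      rw [le_div_iff₀ (by positivity)]; nlinarith [sq_nonneg a]
    have h2 : 0 ≤ (a - q) ^ 2 / (4 * q) := by positivity
    nlinarith
  rw [← hw]
  have b1 : (4 * π * t) ^ (-(N:ℝ) / 2) ≤ t ^ (-(N:ℝ) / 2) := by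
    apply Real.rpow_le_rpow_of_nonpos ht
    · nlinarith [Real.pi_gt_three]
    · linarith
  have b2 : (1 + r + t) ^ p ≤ 2 ^ p * (t ^ p * (1 + q) ^ p) := by
    rw [← Real.mul_rpow ht.le (by positivity), ← Real.mul_rpow (by norm_num) (by positivity)]
    apply Real.rpow_le_rpow (by positivity) _ hp0
    nlinarith
  have b3 : 1 + r ≤ 2 * r := by linarith
  have hsplit : Real.exp (-w) = Real.exp (-(1/2) * w) * Real.exp (-w/2) := by
    rw [← Real.exp_add]; congr 1; ring
  have b4 : Real.exp (-w/2) ≤ Real.exp (-(q/4 - a/2)/2) := by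
    apply Real.exp_le_exp.2; linarith
  have b5 : r / (4 * (t * √t)) ≤ gW' a r t := by
    unfold gW'
    gcongr
    nlinarith
  have b6 : (1 + q) ^ p * q ^ (1 - s) ≤ (1 + q) ^ N := by
    calc (1 + q) ^ p * q ^ (1 - s) ≤ (1 + q) ^ p * (1 + q) ^ (1 - s) := by
          gcongr
          · linarith
      _ = (1 + q) ^ (p + (1 - s)) := by rw [Real.rpow_add (by positivity)]
      _ ≤ (1 + q) ^ (N:ℝ) := by
          apply Real.rpow_le_rpow_of_exponent_le
          · linarith
          · rw [hp]; linarith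
      _ = _ := Real.rpow_natCast _ _
  have b7 := poly_exp N a q hq0
  have e1 : t ^ (-(N:ℝ)/2) * t ^ p * t ^ (s - 1) = q ^ (1 - s) * r ^ (s - 1) * (1 / (t * √t)) := by
    have : q ^ (1 - s) * r ^ (s - 1) = t ^ (s - 1) := by
      rw [hrq, Real.mul_rpow hq0.le ht.le, ← mul_assoc, ← Real.rpow_add hq0]
      simp
    rw [this, mul_comm]
    congr 1
    rw [← Real.rpow_add ht, Real.sqrt_eq_rpow]
    nth_rewrite 2 [← Real.rpow_one t]
    rw [← Real.rpow_add ht, one_div, ← Real.rpow_neg ht.le]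
    congr 1
    rw [hp]; ring
  have hts : 0 < t * √t := mul_pos ht (Real.sqrt_pos.2 ht)
  calc (4 * π * t) ^ (-(N:ℝ) / 2) * (Real.exp (-a * r) * Real.exp (-w)) * (1 + r + t) ^ p *
        (1 + r) * t ^ (s - 1)
      ≤ t ^ (-(N:ℝ) / 2) * (Real.exp (-a * r) * Real.exp (-w)) * (2 ^ p * (t ^ p * (1 + q) ^ p)) *
        (2 * r) * t ^ (s - 1) := by gcongr
    _ = (t ^ (-(N:ℝ)/2) * t ^ p * t ^ (s - 1)) * (Real.exp (-a * r) * Real.exp (-w)) * 2 ^ p *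
        (1 + q) ^ p * (2 * r) := by ring
    _ = 2 ^ p * 8 * (((1 + q) ^ p * q ^ (1 - s)) * Real.exp (-w/2)) * Real.exp (-a * r) *
        r ^ (s - 1) * (r / (4 * (t * √t)) * Real.exp (-(1/2) * w)) := by
        rw [e1, hsplit]; field_simp; ring
    _ ≤ 2 ^ p * 8 * ((1 + q) ^ N * Real.exp (-(q/4 - a/2)/2)) * Real.exp (-a * r) *
        r ^ (s - 1) * (gW' a r t * Real.exp (-(1/2) * w)) := by gcongr
    _ ≤ 2 ^ p * 8 * ((N.factorial : ℝ) * 8 ^ N * Real.exp (1 / 8 + a / 4)) * Real.exp (-a * r) *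
        r ^ (s - 1) * (gW' a r t * Real.exp (-(1/2) * w)) := by
        have := (gW'_pos a r t (by linarith) hr0 ht).le
        gcongr

lemma lower (N : ℕ) (hN3 : 3 ≤ N) (s : ℝ) (hs1 : s < 1) (r t : ℝ) (hr : 1 ≤ r)
    (ht1 : r / ((N:ℝ) - 1) ≤ t) (ht2 : t ≤ r / ((N:ℝ) - 1) + √r) :
    (8 * π) ^ (-(N:ℝ)/2) * Real.exp (-((N:ℝ) - 1) ^ 3 / 4) * 2 ^ (s - 1) *
      Real.exp (-((N : ℝ) - 1) * r) * (r ^ (s - 1) / √r) ≤ hN N t r * t ^ (s - 1) := by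
  have hN' : (3:ℝ) ≤ N := by exact_mod_cast hN3
  obtain ⟨a, ha⟩ : ∃ a : ℝ, a = (N:ℝ) - 1 := ⟨_, rfl⟩
  obtain ⟨p, hp⟩ : ∃ p : ℝ, p = ((N:ℝ) - 3) / 2 := ⟨_, rfl⟩
  have hp0 : 0 ≤ p := by rw [hp]; linarith
  have ha2 : 2 ≤ a := by linarith
  have hr0 : 0 < r := by linarith
  rw [← ha] at ht1 ht2
  have ht : 0 < t := lt_of_lt_of_le (by positivity) ht1
  unfold hN
  rw [← ha, ← hp, exp_split a r t ht, Real.exp_add]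
  have hx0 : 0 < √r := Real.sqrt_pos.2 hr0
  have hx2 : √r ^ 2 = r := Real.sq_sqrt hr0.le
  have hat1 : r ≤ a * t := by
    rw [div_le_iff₀ (by linarith)] at ht1; linarith
  have hat2 : a * t - r ≤ a * √r := by
    have : a * t ≤ a * (r / a + √r) := by gcongr
    have e : a * (r / a + √r) = r + a * √r := by field_simp
    linarith
  have ht2r : t ≤ 2 * r := by
    have h1 : r / a ≤ r := div_le_self hr0.le (by linarith)
    have h2 : √r ≤ r := by nlinarith [Real.one_le_sqrt.2 hr]
    linarith
  have hw : gW a r t ^ 2 ≤ a ^ 3 / 4 := by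
    rw [gW_sq a r t ht, div_le_iff₀ (by positivity)]
    calc (a * t - r) ^ 2 ≤ (a * √r) ^ 2 := by
          apply pow_le_pow_left₀ <;> linarith
      _ = a ^ 2 * r := by rw [mul_pow, hx2]
      _ ≤ a ^ 2 * (a * t) := by gcongr
      _ = _ := by ring
  have b0 : Real.exp (-a ^ 3 / 4) ≤ Real.exp (-gW a r t ^ 2) := by
    apply Real.exp_le_exp.2; linarith
  have b1 : (8 * π) ^ (-(N:ℝ)/2) * r ^ (-(N:ℝ)/2) ≤ (4 * π * t) ^ (-(N:ℝ) / 2) := by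
    rw [← Real.mul_rpow (by positivity) hr0.le]
    apply Real.rpow_le_rpow_of_nonpos (by positivity)
    · nlinarith [Real.pi_pos]
    · linarith
  have b2 : r ^ p ≤ (1 + r + t) ^ p := by
    apply Real.rpow_le_rpow hr0.le _ hp0; linarith
  have b3 : r ≤ 1 + r := by linarith
  have b4 : 2 ^ (s - 1) * r ^ (s - 1) ≤ t ^ (s - 1) := by
    rw [← Real.mul_rpow (by norm_num) hr0.le]
    apply Real.rpow_le_rpow_of_nonpos ht ht2r; linarith
  have e1 : r ^ (-(N:ℝ)/2) * r ^ p * r = 1 / √r := by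
    rw [Real.sqrt_eq_rpow, one_div, ← Real.rpow_neg hr0.le]
    nth_rewrite 3 [← Real.rpow_one r]
    rw [← Real.rpow_add hr0, ← Real.rpow_add hr0]
    congr 1
    rw [hp]; ring
  calc _ = ((8 * π) ^ (-(N:ℝ)/2) * Real.exp (-a ^ 3 / 4) * 2 ^ (s - 1) *
      Real.exp (-a * r) * r ^ (s - 1)) * (1 / √r) := by ring
    _ = ((8 * π) ^ (-(N:ℝ)/2) * r ^ (-(N:ℝ)/2)) * (Real.exp (-a * r) * Real.exp (-a ^ 3 / 4)) *
        r ^ p * r * (2 ^ (s - 1) * r ^ (s - 1)) := by rw [← e1]; ring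
    _ ≤ _ := by gcongr

theorem F_long_distance_estimate (N : ℕ) (hN3 : 3 ≤ N) (s : ℝ) (hs0 : 0 < s) (hs1 : s < 1) :
    ∃ R₂ > (0 : ℝ), ∃ C₂ > (0 : ℝ), ∃ C₂' > (0 : ℝ),
      ∀ r : ℝ, R₂ ≤ r →
        C₂ * Real.exp (-((N : ℝ) - 1) * r) * r ^ (s - 1) ≤ F N s r ∧
          F N s r ≤ C₂' * Real.exp (-((N : ℝ) - 1) * r) * r ^ (s - 1) := by
  have hN' : (3:ℝ) ≤ N := by exact_mod_cast hN3
  have ha : (0:ℝ) < (N:ℝ) - 1 := by linarith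
  refine ⟨1, one_pos, (8 * π) ^ (-(N:ℝ)/2) * Real.exp (-((N:ℝ) - 1) ^ 3 / 4) * 2 ^ (s - 1),
    by positivity, KK N * √(π / (1/2)), mul_pos (KK_pos N) (by positivity), ?_⟩
  intro r hr
  have hr0 : 0 < r := by linarith
  have hK := KK_pos N
  obtain ⟨gi, gb⟩ := gauss_int ((N:ℝ) - 1) r ha hr0
  have hpos : ∀ t ∈ Ioi (0:ℝ), 0 ≤ hN N t r * t ^ (s - 1) := by
    intro t ht
    have ht : 0 < t := ht
    unfold hN
    positivity
  have gi' := gi.const_mul (KK N * Real.exp (-((N : ℝ) - 1) * r) * r ^ (s - 1))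
  have hint : IntegrableOn (fun t => hN N t r * t ^ (s - 1)) (Ioi 0) := by
    refine Integrable.mono' gi' ?_ ?_
    · apply Measurable.aestronglyMeasurable
      unfold hN
      fun_prop
    · filter_upwards [ae_restrict_mem measurableSet_Ioi] with t ht
      rw [Real.norm_of_nonneg (hpos t ht)]
      exact pointwise N hN3 s hs0 hs1 r t hr ht
  constructor
  · have hx0 : 0 < √r := Real.sqrt_pos.2 hr0
    have hsub : Icc (r / ((N:ℝ) - 1)) (r / ((N:ℝ) - 1) + √r) ⊆ Ioi (0:ℝ) := by
      intro t ht
      exact lt_of_lt_of_le (by positivity) ht.1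
    have h1 := setIntegral_ge_of_const_le_real measurableSet_Icc (by simp)
      (fun t ht => lower N hN3 s hs1 r t hr ht.1 ht.2) (hint.mono_set hsub)
    have h2 : ∫ t in Icc (r / ((N:ℝ) - 1)) (r / ((N:ℝ) - 1) + √r), hN N t r * t ^ (s - 1)
        ≤ F N s r := by
      unfold F
      apply setIntegral_mono_set hint
      · filter_upwards [ae_restrict_mem measurableSet_Ioi] with t ht using hpos t ht
      · exact hsub.eventuallyLE
    refine le_trans (le_of_eq ?_) (h1.trans h2)
    rw [Real.volume_real_Icc_of_le (by linarith)]
    field_simp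
    ring
  · unfold F
    calc _ ≤ ∫ t in Ioi 0, KK N * Real.exp (-((N : ℝ) - 1) * r) * r ^ (s - 1) *
        (gW' ((N:ℝ) - 1) r t * Real.exp (-(1/2) * (gW ((N:ℝ) - 1) r t) ^ 2)) :=
          setIntegral_mono_on hint gi' measurableSet_Ioi
            (fun t ht => pointwise N hN3 s hs0 hs1 r t hr ht)
      _ = KK N * Real.exp (-((N : ℝ) - 1) * r) * r ^ (s - 1) * _ := integral_const_mul _ _
      _ ≤ KK N * Real.exp (-((N : ℝ) - 1) * r) * r ^ (s - 1) * √(π / (1/2)) := by gcongr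
      _ = _ := by ring
end

section
/- For every integer N ≥ 3 and every s with 0 < s < 1, there exist constants C₃ > 0 and C₃' > 0, depending only on N and s, such that C₃ · r^{-(N-2s)} ≤ F_{N,s}(r) ≤ C₃' · r^{-(N-2s)} for all r with 0 < r ≤ 1. -/
open Real MeasureTheory Set Filter

noncomputable def auxBase (N : ℕ) (s u : ℝ) : ℝ :=
  (4 * π * u) ^ (-(N : ℝ) / 2) * Real.exp (-(1 / (4 * u))) * u ^ (s - 1)

noncomputable def auxW (N : ℕ) (r t : ℝ) : ℝ :=
  Real.exp (-(((N : ℝ) - 1) ^ 2 * t) / 4 - ((N : ℝ) - 1) * r / 2) *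
    (1 + r + t) ^ (((N : ℝ) - 3) / 2) * (1 + r)

lemma auxBase_pos (N : ℕ) (s u : ℝ) (hu : 0 < u) : 0 < auxBase N s u := by
  unfold auxBase
  have := Real.pi_pos
  positivity

lemma auxBase_meas (N : ℕ) (s : ℝ) : Measurable (auxBase N s) := by
  unfold auxBase
  fun_prop

lemma auxW_meas (N : ℕ) (r : ℝ) : Measurable (auxW N r) := by
  unfold auxW
  fun_prop

lemma auxBase_int (N : ℕ) (hN3 : 3 ≤ N) (s : ℝ) (hs1 : s < 1) :
    IntegrableOn (auxBase N s) (Ioi 0) := by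
  have h3 : (3 : ℝ) ≤ N := by exact_mod_cast hN3
  have h1 : IntegrableOn (fun v : ℝ => v ^ ((N : ℝ) / 2 - s - 1) * Real.exp (-(1 / 4) * v))
      (Ioi 0) := by
    have := integrableOn_rpow_mul_exp_neg_mul_rpow (p := 1) (s := (N : ℝ) / 2 - s - 1)
      (b := 1 / 4) (by linarith) (by norm_num) (by norm_num)
    simpa using this
  have h2 := (integrableOn_Ioi_comp_rpow_iff' _ (p := -1) (by norm_num)).2 h1
  have h4 := h2.const_mul ((4 * π) ^ (-(N : ℝ) / 2))
  refine IntegrableOn.congr_fun h4 ?_ measurableSet_Ioi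
  intro u hu
  have hu : 0 < u := hu
  have hpi := Real.pi_pos
  simp only [auxBase, smul_eq_mul]
  rw [Real.mul_rpow (by positivity) hu.le, ← Real.rpow_mul hu.le, Real.rpow_neg_one]
  have e1 : u ^ ((-1 : ℝ) - 1) * u ^ (-1 * ((N : ℝ) / 2 - s - 1))
      = u ^ (-(N : ℝ) / 2) * u ^ (s - 1) := by
    rw [← Real.rpow_add hu, ← Real.rpow_add hu]; congr 1; ring
  have e2 : -(1 / 4) * u⁻¹ = -(1 / (4 * u)) := by field_simp
  rw [e2]
  linear_combination ((4 * π) ^ (-(N : ℝ) / 2) * Real.exp (-(1 / (4 * u)))) * e1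

lemma auxW_upper (N : ℕ) (hN3 : 3 ≤ N) (r t : ℝ) (hr : 0 < r) (hr1 : r ≤ 1) (ht : 0 < t) :
    auxW N r t ≤ 2 ^ (((N : ℝ) - 3) / 2) * 2 := by
  have h3 : (3 : ℝ) ≤ N := by exact_mod_cast hN3
  unfold auxW
  have hp : 0 ≤ ((N : ℝ) - 3) / 2 := by linarith
  have a1 : (1 + r + t) ^ (((N : ℝ) - 3) / 2) ≤
      2 ^ (((N : ℝ) - 3) / 2) * Real.exp (t / 2 * (((N : ℝ) - 3) / 2)) := by
    rw [Real.exp_mul, ← Real.mul_rpow (by norm_num) (Real.exp_pos _).le]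
    apply Real.rpow_le_rpow (by positivity) _ hp
    have := Real.add_one_le_exp (t / 2)
    linarith
  have a2 : Real.exp (-(((N : ℝ) - 1) ^ 2 * t) / 4 - ((N : ℝ) - 1) * r / 2) *
      Real.exp (t / 2 * (((N : ℝ) - 3) / 2)) ≤ 1 := by
    rw [← Real.exp_add, Real.exp_le_one_iff]
    have b1 : 0 ≤ ((N : ℝ) - 1) * r := mul_nonneg (by linarith) hr.le
    have b2 : 0 ≤ (((N : ℝ) - 1) ^ 2 - ((N : ℝ) - 3)) * t := mul_nonneg (by nlinarith) ht.le
    linarith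
  have hE := Real.exp_pos (-(((N : ℝ) - 1) ^ 2 * t) / 4 - ((N : ℝ) - 1) * r / 2)
  have h2 : (0 : ℝ) < 2 ^ (((N : ℝ) - 3) / 2) := by positivity
  apply mul_le_mul _ (by linarith) (by linarith) h2.le
  calc _ ≤ _ := mul_le_mul_of_nonneg_left a1 hE.le
    _ = 2 ^ (((N : ℝ) - 3) / 2) * (Real.exp (-(((N : ℝ) - 1) ^ 2 * t) / 4 - ((N : ℝ) - 1) * r / 2) *
      Real.exp (t / 2 * (((N : ℝ) - 3) / 2))) := by ring
    _ ≤ 2 ^ (((N : ℝ) - 3) / 2) * 1 := mul_le_mul_of_nonneg_left a2 h2.le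
    _ = _ := mul_one _

lemma auxW_lower (N : ℕ) (hN3 : 3 ≤ N) (r u : ℝ) (hr : 0 < r) (hr1 : r ≤ 1) (hu : 0 < u) :
    Real.exp (-(((N : ℝ) - 1) ^ 2 * u) / 4 - ((N : ℝ) - 1) / 2) ≤ auxW N r (r ^ 2 * u) := by
  have h3 : (3 : ℝ) ≤ N := by exact_mod_cast hN3
  unfold auxW
  have ht : 0 < r ^ 2 * u := by positivity
  have a1 : 1 ≤ (1 + r + r ^ 2 * u) ^ (((N : ℝ) - 3) / 2) :=
    Real.one_le_rpow (by linarith) (by linarith)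
  have a2 : Real.exp (-(((N : ℝ) - 1) ^ 2 * u) / 4 - ((N : ℝ) - 1) / 2) ≤
      Real.exp (-(((N : ℝ) - 1) ^ 2 * (r ^ 2 * u)) / 4 - ((N : ℝ) - 1) * r / 2) := by
    apply Real.exp_le_exp.2
    have b1 : 0 ≤ ((N : ℝ) - 1) * (1 - r) := mul_nonneg (by linarith) (by linarith)
    have b2 : 0 ≤ ((N : ℝ) - 1) ^ 2 * ((1 - r ^ 2) * u) :=
      mul_nonneg (by positivity) (mul_nonneg (by nlinarith) hu.le)
    linarith
  have hE := Real.exp_pos (-(((N : ℝ) - 1) ^ 2 * (r ^ 2 * u)) / 4 - ((N : ℝ) - 1) * r / 2)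
  have a3 := le_mul_of_one_le_right hE.le a1
  have a4 := le_mul_of_one_le_right (hE.le.trans a3) (show 1 ≤ 1 + r by linarith)
  linarith

lemma aux_scale (N : ℕ) (s r u : ℝ) (hr : 0 < r) (hu : 0 < u) :
    r ^ 2 * (hN N (r ^ 2 * u) r * (r ^ 2 * u) ^ (s - 1)) =
      r ^ (-((N : ℝ) - 2 * s)) * (auxBase N s u * auxW N r (r ^ 2 * u)) := by
  have hpi := Real.pi_pos
  unfold hN auxBase auxW
  have e1 : (4 * π * (r ^ 2 * u)) ^ (-(N : ℝ) / 2) =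
      (4 * π * u) ^ (-(N : ℝ) / 2) * r ^ (-(N : ℝ)) := by
    rw [show 4 * π * (r ^ 2 * u) = (4 * π * u) * r ^ 2 by ring,
      Real.mul_rpow (by positivity) (by positivity), ← Real.rpow_natCast r 2,
      ← Real.rpow_mul hr.le]
    congr 2; push_cast; ring
  have e2 : (r ^ 2 * u) ^ (s - 1) = r ^ (2 * s - 2) * u ^ (s - 1) := by
    rw [Real.mul_rpow (by positivity) hu.le, ← Real.rpow_natCast r 2, ← Real.rpow_mul hr.le]
    congr 2; push_cast; ring
  have e3 : r ^ 2 * r ^ (-(N : ℝ)) * r ^ (2 * s - 2) = r ^ (-((N : ℝ) - 2 * s)) := by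
    rw [← Real.rpow_natCast r 2, ← Real.rpow_add hr, ← Real.rpow_add hr]
    congr 1; push_cast; ring
  have e4 : r ^ 2 / (4 * (r ^ 2 * u)) = 1 / (4 * u) := by field_simp
  rw [e1, e2, e4, sub_eq_add_neg _ (1 / (4 * u)), Real.exp_add, ← e3]
  ring

theorem F_estimate_le_one (N : ℕ) (hN3 : 3 ≤ N) (s : ℝ) (hs0 : 0 < s) (hs1 : s < 1) :
    ∃ C₃ > (0 : ℝ), ∃ C₃' > (0 : ℝ),
      ∀ r : ℝ, 0 < r → r ≤ 1 →
        C₃ * r ^ (-((N : ℝ) - 2 * s)) ≤ F N s r ∧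
          F N s r ≤ C₃' * r ^ (-((N : ℝ) - 2 * s)) := by
  have h3 : (3 : ℝ) ≤ N := by exact_mod_cast hN3
  have hB := auxBase_int N hN3 s hs1
  set K : ℝ := 2 ^ (((N : ℝ) - 3) / 2) * 2 with hK
  have hBK : IntegrableOn (fun u => auxBase N s u * K) (Ioi 0) := hB.mul_const K
  have hKpos : 0 < K := by positivity
  set m : ℝ → ℝ := fun u =>
    auxBase N s u * Real.exp (-(((N : ℝ) - 1) ^ 2 * u) / 4 - ((N : ℝ) - 1) / 2) with hm
  have hmm : Measurable m := (auxBase_meas N s).mul (by fun_prop)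
  have hmpos : ∀ u, 0 < u → 0 < m u := fun u hu =>
    mul_pos (auxBase_pos N s u hu) (Real.exp_pos _)
  have hmi : IntegrableOn m (Ioi 0) := by
    refine Integrable.mono' hB hmm.aestronglyMeasurable ?_
    refine (ae_restrict_iff' measurableSet_Ioi).2 (Eventually.of_forall fun u hu => ?_)
    have hu : 0 < u := hu
    rw [Real.norm_of_nonneg (hmpos u hu).le]
    apply mul_le_of_le_one_right (auxBase_pos N s u hu).le
    rw [Real.exp_le_one_iff]
    have : 0 ≤ ((N : ℝ) - 1) ^ 2 * u := by positivity
    linarith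
  have key : ∀ f : ℝ → ℝ, (∀ u, 0 < u → 0 < f u) → IntegrableOn f (Ioi 0) →
      0 < ∫ u in Ioi 0, f u := by
    intro f hf hfi
    rw [setIntegral_pos_iff_support_of_nonneg_ae _ hfi]
    · have : Function.support f ∩ Ioi 0 = Ioi 0 := by
        apply inter_eq_right.2
        intro u hu
        exact (hf u hu).ne'
      rw [this]; simp
    · exact (ae_restrict_iff' measurableSet_Ioi).2
        (Eventually.of_forall fun u hu => (hf u hu).le)
  refine ⟨∫ u in Ioi 0, m u, key m hmpos hmi, ∫ u in Ioi 0, auxBase N s u * K,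
    key _ (fun u hu => mul_pos (auxBase_pos N s u hu) hKpos) hBK, ?_⟩
  intro r hr hr1
  have hr2 : 0 < r ^ 2 := by positivity
  set G : ℝ → ℝ := fun u => auxBase N s u * auxW N r (r ^ 2 * u) with hG
  have hmG : ∀ u ∈ Ioi (0 : ℝ), m u ≤ G u := fun u hu =>
    mul_le_mul_of_nonneg_left (auxW_lower N hN3 r u hr hr1 hu) (auxBase_pos N s u hu).le
  have hGK : ∀ u ∈ Ioi (0 : ℝ), G u ≤ auxBase N s u * K := fun u hu =>
    mul_le_mul_of_nonneg_left (auxW_upper N hN3 r _ hr hr1 (mul_pos hr2 hu))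
      (auxBase_pos N s u hu).le
  have hGm : Measurable G :=
    (auxBase_meas N s).mul ((auxW_meas N r).comp (measurable_const_mul (r ^ 2)))
  have hGi : IntegrableOn G (Ioi 0) := by
    refine Integrable.mono' hBK hGm.aestronglyMeasurable ?_
    refine (ae_restrict_iff' measurableSet_Ioi).2 (Eventually.of_forall fun u hu => ?_)
    rw [Real.norm_of_nonneg ((hmpos u hu).le.trans (hmG u hu))]
    exact hGK u hu
  have hF : F N s r = (∫ u in Ioi 0, G u) * r ^ (-((N : ℝ) - 2 * s)) := by
    have h := integral_comp_mul_left_Ioi (fun t => hN N t r * t ^ (s - 1)) 0 hr2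
    rw [mul_zero, smul_eq_mul] at h
    have h' : F N s r =
        r ^ 2 * ∫ u in Ioi 0, hN N (r ^ 2 * u) r * (r ^ 2 * u) ^ (s - 1) := by
      rw [h, mul_inv_cancel_left₀ hr2.ne']; rfl
    rw [h', ← integral_const_mul, mul_comm (∫ u in Ioi 0, G u), ← integral_const_mul]
    exact setIntegral_congr_fun measurableSet_Ioi fun u hu => aux_scale N s r u hr hu
  have hrp : 0 ≤ r ^ (-((N : ℝ) - 2 * s)) := by positivity
  rw [hF]
  exact ⟨mul_le_mul_of_nonneg_right (setIntegral_mono_on hmi hGi measurableSet_Ioi hmG) hrp,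
    mul_le_mul_of_nonneg_right (setIntegral_mono_on hGi hBK measurableSet_Ioi hGK) hrp⟩
end

section
/- (Global upper bound for the Green function.) For every integer N ≥ 3 and every s with 0 < s < 1, there exists a constant C₅ > 0, depending only on N and s, such that F_{N,s}(r) ≤ C₅ · r^{-(N-2s)} for all r > 0. -/
open Real MeasureTheory Set Filter

lemma aux_bound (N : ℕ) (hN3 : 3 ≤ N) (t r : ℝ) (ht : 0 < t) (hr : 0 < r) :
    hN N t r ≤ (N.factorial * Real.exp 1) * (t ^ (-(N : ℝ) / 2) * Real.exp (-(r ^ 2 / (4 * t)))) := by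
  have hN' : (3 : ℝ) ≤ N := by exact_mod_cast hN3
  have h1 : (4 * π * t) ^ (-(N : ℝ) / 2) ≤ t ^ (-(N : ℝ) / 2) := by
    apply Real.rpow_le_rpow_of_nonpos ht
    · nlinarith [Real.pi_gt_three]
    · linarith
  have h2 : Real.exp (-(((N : ℝ) - 1) ^ 2 * t) / 4 - ((N : ℝ) - 1) * r / 2 - r ^ 2 / (4 * t))
      ≤ Real.exp (-(r + t)) * Real.exp (-(r ^ 2 / (4 * t))) := by
    rw [← Real.exp_add]
    apply Real.exp_le_exp.2
    have ha : t ≤ ((N : ℝ) - 1) ^ 2 * t / 4 := by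
      have : (4 : ℝ) ≤ ((N : ℝ) - 1) ^ 2 := by nlinarith
      nlinarith
    have hb : r ≤ ((N : ℝ) - 1) * r / 2 := by nlinarith
    linarith
  have h3 : (1 + r + t) ^ (((N : ℝ) - 3) / 2) * (1 + r) ≤ N.factorial * Real.exp (1 + r + t) := by
    calc (1 + r + t) ^ (((N : ℝ) - 3) / 2) * (1 + r)
        ≤ (1 + r + t) ^ (((N : ℝ) - 3) / 2) * (1 + r + t) := by
          exact mul_le_mul_of_nonneg_left (by linarith) (by positivity)
      _ = (1 + r + t) ^ (((N : ℝ) - 3) / 2 + 1) := by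
          rw [Real.rpow_add_one (by positivity)]
      _ ≤ (1 + r + t) ^ (N : ℝ) := by
          apply Real.rpow_le_rpow_of_exponent_le <;> linarith
      _ = (1 + r + t) ^ N := Real.rpow_natCast _ _
      _ ≤ N.factorial * Real.exp (1 + r + t) := by
          have := Real.pow_div_factorial_le_exp (1 + r + t) (by positivity) N
          rw [div_le_iff₀ (by positivity)] at this
          linarith
  unfold hN
  rw [mul_assoc]
  calc _ ≤ (t ^ (-(N : ℝ) / 2) * (Real.exp (-(r + t)) * Real.exp (-(r ^ 2 / (4 * t))))) *
        (N.factorial * Real.exp (1 + r + t)) := by gcongr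
    _ = (N.factorial * (Real.exp (-(r + t)) * Real.exp (1 + r + t))) *
        (t ^ (-(N : ℝ) / 2) * Real.exp (-(r ^ 2 / (4 * t)))) := by ring
    _ = _ := by rw [← Real.exp_add]; congr 4; ring

lemma aux_int (a : ℝ) (ha : 0 < a) :
    IntegrableOn (fun t : ℝ => t ^ (-a - 1) * Real.exp (-(1 / (4 * t)))) (Ioi 0) := by
  have h : IntegrableOn (fun y : ℝ => y ^ (a - 1) * Real.exp (-(1/4) * y ^ (1:ℝ))) (Ioi 0) :=
    integrableOn_rpow_mul_exp_neg_mul_rpow (by linarith) (by norm_num) (by norm_num)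
  rw [← integrableOn_Ioi_comp_rpow_iff _ (p := -1) (by norm_num)] at h
  refine h.congr_fun (fun t ht => ?_) measurableSet_Ioi
  have ht : (0:ℝ) < t := ht
  simp only [smul_eq_mul, Real.rpow_one]
  rw [← Real.rpow_mul ht.le, Real.rpow_neg_one t]
  have : t ^ (-a - 1) = t ^ ((-1:ℝ) - 1) * t ^ (-1 * (a - 1)) := by
    rw [← Real.rpow_add ht]; congr 1; ring
  rw [this]
  have e : -(1 / (4 * t)) = -(1/4) * t⁻¹ := by field_simp
  rw [e]; norm_num; ring

theorem F_global_upper_bound (N : ℕ) (hN3 : 3 ≤ N) (s : ℝ) (hs0 : 0 < s) (hs1 : s < 1) :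
    ∃ C₅ > (0 : ℝ), ∀ r : ℝ, 0 < r → F N s r ≤ C₅ * r ^ (-((N : ℝ) - 2 * s)) := by
  have hN' : (3 : ℝ) ≤ N := by exact_mod_cast hN3
  obtain ⟨a, ha⟩ : ∃ a : ℝ, a = N / 2 - s := ⟨_, rfl⟩
  have ha0 : 0 < a := by linarith
  have hint := aux_int a ha0
  set g : ℝ → ℝ := fun t : ℝ => t ^ (-a - 1) * Real.exp (-(1 / (4 * t))) with hg
  have hI : 0 ≤ ∫ t in Ioi (0:ℝ), g t :=
    setIntegral_nonneg measurableSet_Ioi (fun t ht => by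
      have ht : (0:ℝ) < t := ht
      simp only [hg]; positivity)
  obtain ⟨K, hK⟩ : ∃ K : ℝ, K = N.factorial * Real.exp 1 := ⟨_, rfl⟩
  have hK0 : 0 < K := by rw [hK]; positivity
  refine ⟨K * (∫ t in Ioi (0:ℝ), g t) + 1, by positivity, fun r hr => ?_⟩
  obtain ⟨b, hb⟩ : ∃ b : ℝ, b = (r ^ 2)⁻¹ := ⟨_, rfl⟩
  have hb0 : 0 < b := by rw [hb]; positivity
  have hpow : b ^ a = r ^ (-((N : ℝ) - 2 * s)) := by
    have : b = r ^ (-2 : ℝ) := by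
      rw [hb, Real.rpow_neg hr.le]; norm_num
    rw [this, ← Real.rpow_mul hr.le, ha]; congr 1; ring
  have hint' : IntegrableOn (fun t => g (b * t)) (Ioi 0) := by
    rw [integrableOn_Ioi_comp_mul_left_iff _ _ hb0, mul_zero]; exact hint
  have hle : F N s r ≤ ∫ t in Ioi (0:ℝ), (K * b ^ (a + 1)) * g (b * t) := by
    unfold F
    apply integral_mono_of_nonneg
    · refine (ae_restrict_mem measurableSet_Ioi).mono (fun t ht => ?_)
      have ht : (0:ℝ) < t := ht
      simp only [hN, Pi.zero_apply]; positivity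
    · exact hint'.const_mul _
    · refine (ae_restrict_mem measurableSet_Ioi).mono (fun t ht => ?_)
      have ht : (0:ℝ) < t := ht
      have h := aux_bound N hN3 t r ht hr
      rw [← hK] at h
      have e1 : (b * t) ^ (-a - 1) * b ^ (a + 1) = t ^ (-(N : ℝ) / 2) * t ^ (s - 1) := by
        rw [Real.mul_rpow hb0.le ht.le, mul_right_comm, ← Real.rpow_add hb0, ← Real.rpow_add ht, ha]
        ring_nf
        simp
      have e2 : 1 / (4 * (b * t)) = r ^ 2 / (4 * t) := by
        rw [hb]; field_simp
      calc hN N t r * t ^ (s - 1) ≤ (K * (t ^ (-(N : ℝ) / 2) * Real.exp (-(r ^ 2 / (4 * t))))) * t ^ (s - 1) := by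
            gcongr
        _ = K * (t ^ (-(N : ℝ) / 2) * t ^ (s - 1)) * Real.exp (-(r ^ 2 / (4 * t))) := by ring
        _ = (K * b ^ (a + 1)) * g (b * t) := by
            simp only [hg]
            rw [← e1, e2]; ring
  rw [integral_const_mul, integral_comp_mul_left_Ioi _ _ hb0, mul_zero, Real.rpow_add_one hb0.ne',
    hpow, smul_eq_mul] at hle
  have hrp : 0 < r ^ (-((N : ℝ) - 2 * s)) := by positivity
  calc _ ≤ _ := hle
    _ = K * (∫ t in Ioi (0:ℝ), g t) * r ^ (-((N : ℝ) - 2 * s)) := by field_simp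
    _ ≤ _ := by nlinarith
end

section
/- (Exact short-distance asymptotics.) For every integer N ≥ 3 and every s with 0 < s < 1, the limit as r → 0⁺ of r^{N-2s} · F_{N,s}(r) exists and equals Γ(N/2 − s) / (4^{s} π^{N/2}), where Γ denotes the Euler Gamma function. -/
open Real MeasureTheory Set Filter

theorem aux_G (a : ℝ) (ha : 0 < a) :
    IntegrableOn (fun u : ℝ => u ^ (-1 - a) * Real.exp (-(1 / 4 * u⁻¹))) (Ioi 0) ∧
    ∫ u in Ioi (0 : ℝ), u ^ (-1 - a) * Real.exp (-(1 / 4 * u⁻¹)) = 4 ^ a * Real.Gamma a := by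
  have hcongr : ∀ u ∈ Ioi (0 : ℝ), (|(-1 : ℝ)| * u ^ ((-1 : ℝ) - 1)) •
      ((fun v : ℝ => v ^ (a - 1) * Real.exp (-(1 / 4 * v))) (u ^ (-1 : ℝ))) =
      u ^ (-1 - a) * Real.exp (-(1 / 4 * u⁻¹)) := by
    intro u hu
    have hu : 0 < u := hu
    simp only [smul_eq_mul, abs_neg, abs_one, one_mul]
    rw [← Real.rpow_mul hu.le, ← mul_assoc, ← Real.rpow_add hu, Real.rpow_neg_one]
    ring_nf
  have hval := Real.integral_rpow_mul_exp_neg_mul_Ioi ha (by norm_num : (0 : ℝ) < 1 / 4)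
  have hint : ∫ u in Ioi (0 : ℝ), u ^ (-1 - a) * Real.exp (-(1 / 4 * u⁻¹)) =
      4 ^ a * Real.Gamma a := by
    rw [← setIntegral_congr_fun measurableSet_Ioi hcongr,
      integral_comp_rpow_Ioi (fun v : ℝ => v ^ (a - 1) * Real.exp (-(1 / 4 * v))) (by norm_num), hval]
    norm_num
  refine ⟨?_, hint⟩
  by_contra h
  have h0 := integral_undef h
  rw [hint] at h0
  have : 0 < (4 : ℝ) ^ a * Real.Gamma a := mul_pos (by positivity) (Real.Gamma_pos_of_pos ha)
  linarith

theorem aux_scale_s11 (N : ℕ) (s r : ℝ) (hr : 0 < r) :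
    r ^ ((N : ℝ) - 2 * s) * F N s r = ∫ u in Ioi (0 : ℝ),
      (4 * π) ^ (-(N : ℝ) / 2) * (u ^ (-1 - ((N : ℝ) / 2 - s)) * Real.exp (-(1 / 4 * u⁻¹))) *
      (Real.exp (-(((N : ℝ) - 1) ^ 2 * (r ^ 2 * u)) / 4 - ((N : ℝ) - 1) * r / 2) *
        (1 + r + r ^ 2 * u) ^ (((N : ℝ) - 3) / 2) * (1 + r)) := by
  have hr2 : (0 : ℝ) < r ^ 2 := by positivity
  have h := integral_comp_mul_left_Ioi (fun t => hN N t r * t ^ (s - 1)) 0 hr2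
  rw [mul_zero, smul_eq_mul] at h
  have hF : F N s r = r ^ 2 * ∫ u in Ioi (0 : ℝ), hN N (r ^ 2 * u) r * (r ^ 2 * u) ^ (s - 1) := by
    rw [h, F, mul_inv_cancel_left₀ hr2.ne']
  rw [hF, ← mul_assoc, ← integral_const_mul]
  refine setIntegral_congr_fun measurableSet_Ioi ?_
  intro u hu
  have hu : 0 < u := hu
  have hπ := Real.pi_pos
  have e1 : r ^ 2 / (4 * (r ^ 2 * u)) = 1 / 4 * u⁻¹ := by field_simp
  have e2 : (4 * π * (r ^ 2 * u)) ^ (-(N : ℝ) / 2) =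
      (4 * π) ^ (-(N : ℝ) / 2) * (r ^ (-(N : ℝ)) * u ^ (-(N : ℝ) / 2)) := by
    rw [Real.mul_rpow (by positivity) (by positivity), Real.mul_rpow hr2.le hu.le,
      ← Real.rpow_natCast r 2, ← Real.rpow_mul hr.le]
    congr 3; push_cast; ring
  have e3 : (r ^ 2 * u) ^ (s - 1) = r ^ (2 * s - 2) * u ^ (s - 1) := by
    rw [Real.mul_rpow hr2.le hu.le, ← Real.rpow_natCast r 2, ← Real.rpow_mul hr.le]
    congr 2; push_cast; ring
  have e4 : r ^ ((N : ℝ) - 2 * s) * r ^ 2 * (r ^ (-(N : ℝ)) * r ^ (2 * s - 2)) = 1 := by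
    rw [← Real.rpow_natCast r 2, ← Real.rpow_add hr, ← Real.rpow_add hr, ← Real.rpow_add hr]
    rw [← Real.rpow_zero r]; congr 1; push_cast; ring
  have e5 : u ^ (-1 - ((N : ℝ) / 2 - s)) = u ^ (-(N : ℝ) / 2) * u ^ (s - 1) := by
    rw [← Real.rpow_add hu]; congr 1; ring
  simp only [hN]
  rw [e1, e2, e3, e5, sub_eq_add_neg (_ - _) (1 / 4 * u⁻¹), Real.exp_add]
  generalize Real.exp (-(1 / 4 * u⁻¹)) = E1
  generalize Real.exp (-(((N : ℝ) - 1) ^ 2 * (r ^ 2 * u)) / 4 - ((N : ℝ) - 1) * r / 2) = E2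
  generalize (1 + r + r ^ 2 * u) ^ (((N : ℝ) - 3) / 2) = E3
  generalize (4 * π) ^ (-(N : ℝ) / 2) = E4
  generalize u ^ (-(N : ℝ) / 2) = E5
  generalize u ^ (s - 1) = E6
  linear_combination (E4 * (E5 * E6 * E1) * (E2 * E3 * (1 + r))) * e4

theorem aux_bound_s11 (n r x : ℝ) (hn : 3 ≤ n) (hr : 0 < r) (hr1 : r < 1) (hx : 0 ≤ x) :
    ‖Real.exp (-((n - 1) ^ 2 * x) / 4 - (n - 1) * r / 2) *
        (1 + r + x) ^ ((n - 3) / 2) * (1 + r)‖ ≤ 2 ^ ((n - 3) / 2) * 2 := by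
  have hp : 0 ≤ (n - 3) / 2 := by linarith
  rw [Real.norm_of_nonneg (by positivity)]
  have h1 : (1 + r + x) ^ ((n - 3) / 2) ≤ 2 ^ ((n - 3) / 2) * Real.exp (x / 2 * ((n - 3) / 2)) := by
    rw [Real.exp_mul, ← Real.mul_rpow (by norm_num) (Real.exp_pos _).le]
    apply Real.rpow_le_rpow (by positivity) _ hp
    have := Real.add_one_le_exp (x / 2)
    linarith
  have h2 : Real.exp (-((n - 1) ^ 2 * x) / 4 - (n - 1) * r / 2) * Real.exp (x / 2 * ((n - 3) / 2)) ≤ 1 := by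
    rw [← Real.exp_add, Real.exp_le_one_iff]
    have h3 : 0 ≤ (n - 1) * r := mul_nonneg (by linarith) hr.le
    have h4 : 0 ≤ ((n - 1) ^ 2 - (n - 3)) * x := mul_nonneg (by nlinarith) hx
    nlinarith
  refine mul_le_mul ?_ (by linarith) (by linarith) (by positivity)
  calc _ ≤ Real.exp (-((n - 1) ^ 2 * x) / 4 - (n - 1) * r / 2) *
        (2 ^ ((n - 3) / 2) * Real.exp (x / 2 * ((n - 3) / 2))) := by gcongr
    _ = 2 ^ ((n - 3) / 2) * (Real.exp (-((n - 1) ^ 2 * x) / 4 - (n - 1) * r / 2) *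
        Real.exp (x / 2 * ((n - 3) / 2))) := by ring
    _ ≤ 2 ^ ((n - 3) / 2) * 1 := by gcongr
    _ = _ := mul_one _

theorem F_short_distance_asymptotics (N : ℕ) (hN3 : 3 ≤ N) (s : ℝ) (hs0 : 0 < s) (hs1 : s < 1) :
    Tendsto (fun r : ℝ => r ^ ((N : ℝ) - 2 * s) * F N s r) (nhdsWithin 0 (Ioi 0))
      (nhds (Real.Gamma ((N : ℝ) / 2 - s) / ((4 : ℝ) ^ s * π ^ ((N : ℝ) / 2)))) := by
  have hn : (3 : ℝ) ≤ N := by exact_mod_cast hN3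
  have hπ := Real.pi_pos
  obtain ⟨hGi, hGv⟩ := aux_G ((N : ℝ) / 2 - s) (by linarith)
  have hlim : Real.Gamma ((N : ℝ) / 2 - s) / ((4 : ℝ) ^ s * π ^ ((N : ℝ) / 2)) =
      ∫ u in Ioi (0 : ℝ), (4 * π) ^ (-(N : ℝ) / 2) *
        (u ^ (-1 - ((N : ℝ) / 2 - s)) * Real.exp (-(1 / 4 * u⁻¹))) := by
    rw [integral_const_mul, hGv, neg_div, Real.rpow_neg (by positivity),
      Real.mul_rpow (by norm_num) hπ.le, Real.rpow_sub (by norm_num)]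
    have h4 : (0 : ℝ) < 4 ^ ((N : ℝ) / 2) := by positivity
    field_simp
  have hev : ∀ᶠ r : ℝ in nhdsWithin 0 (Ioi 0), 0 < r ∧ r < 1 := by
    have := Ioo_mem_nhdsGT (zero_lt_one (α := ℝ))
    filter_upwards [this] with r hr using hr
  rw [hlim]
  refine Tendsto.congr' (f₁ := fun r : ℝ => ∫ u in Ioi (0 : ℝ),
      (4 * π) ^ (-(N : ℝ) / 2) * (u ^ (-1 - ((N : ℝ) / 2 - s)) * Real.exp (-(1 / 4 * u⁻¹))) *
      (Real.exp (-(((N : ℝ) - 1) ^ 2 * (r ^ 2 * u)) / 4 - ((N : ℝ) - 1) * r / 2) *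
        (1 + r + r ^ 2 * u) ^ (((N : ℝ) - 3) / 2) * (1 + r))) ?_ ?_
  · filter_upwards [hev] with r hr using (aux_scale_s11 N s r hr.1).symm
  refine tendsto_integral_filter_of_dominated_convergence
    (fun u => (4 * π) ^ (-(N : ℝ) / 2) *
      (u ^ (-1 - ((N : ℝ) / 2 - s)) * Real.exp (-(1 / 4 * u⁻¹))) *
      (2 ^ (((N : ℝ) - 3) / 2) * 2)) ?_ ?_ ?_ ?_
  · refine Eventually.of_forall fun r => ?_
    apply Measurable.aestronglyMeasurable
    fun_prop
  · filter_upwards [hev] with r hr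
    filter_upwards [ae_restrict_mem measurableSet_Ioi] with u hu
    have hu : 0 < u := hu
    rw [norm_mul]
    refine mul_le_mul ?_ (aux_bound_s11 N r (r ^ 2 * u) hn hr.1 hr.2 (by positivity)) (norm_nonneg _)
      (by positivity)
    rw [Real.norm_of_nonneg (by positivity)]
  · exact (hGi.const_mul _).mul_const _
  · filter_upwards [ae_restrict_mem measurableSet_Ioi] with u hu
    have hc : ContinuousAt (fun r : ℝ => (4 * π) ^ (-(N : ℝ) / 2) *
      (u ^ (-1 - ((N : ℝ) / 2 - s)) * Real.exp (-(1 / 4 * u⁻¹))) *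
      (Real.exp (-(((N : ℝ) - 1) ^ 2 * (r ^ 2 * u)) / 4 - ((N : ℝ) - 1) * r / 2) *
        (1 + r + r ^ 2 * u) ^ (((N : ℝ) - 3) / 2) * (1 + r))) 0 := by
      refine ContinuousAt.mul continuousAt_const (ContinuousAt.mul (ContinuousAt.mul
        (by fun_prop) (ContinuousAt.rpow_const (by fun_prop) (Or.inl (by norm_num)))) (by fun_prop))
    have := hc.tendsto.mono_left (nhdsWithin_le_nhds (s := Ioi (0 : ℝ)))
    simpa using this
end
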